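/- Fix 0 < β < 1 and 0 < ϰ ≤ Λ. Suppose Ω is of class C^{2,β}, f ∈ C^{2,β}(Γ), and min_Γ f > 0. Then there exists a constant ε = ε(n,Ω,ϰ,Λ,f) > 0 such that for every (𝔞,𝔮) ∈ 𝒟_{ϰ,Λ}, the solution u_{𝔞,𝔮}(f) of −div(𝔞∇u) + 𝔮u = 0 in Ω, u = f on Γ, satisfies u_{𝔞,𝔮}(f) ≥ ε on Ω̄. -/

import Mathlib

/-!
The bound is a comparison with an explicit strict subsolution. Let `w y = δ * exp (t * y i₀)`.
Expanding the divergence, `div (𝔞 ∇w) - 𝔮 w = (𝔞 t² + t ∂𝔞/∂y_{i₀} - 𝔮) w`, and since `𝔞 ≥ ϰ`,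
`|∇𝔞| ≤ Λ` and `𝔮 ≤ Λ`, this is positive as soon as `ϰ t² - Λ t - Λ > 0`. With `δ` chosen so small
that `w ≤ m` on the closure of `Ω`, the difference `u - w` is nonnegative on the boundary. A
negative minimum of `u - w` would be interior; there the gradient vanishes and the pure second
derivatives are nonnegative (`pd_pd_nonneg`), so `0 ≤ div (𝔞 ∇(u - w)) < 𝔮 (u - w) ≤ 0`, which is
absurd. Hence `u ≥ w ≥ ε`, where `ε` is a lower bound of `w` on a ball containing `Ω`.

Only interior regularity of `u`, its continuity up to the boundary, and the sup bounds contained in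
the Hölder norms enter; `abs_pd_le_and_le` extracts these bounds.
-/

open MeasureTheory Set
open scoped ENNReal NNReal Topology

noncomputable section

/-- `n`-dimensional Euclidean space. -/
abbrev Euc (n : ℕ) : Type := EuclideanSpace ℝ (Fin n)

namespace HybridIP

variable {n : ℕ}

/-- The `i`-th partial derivative. -/
def pd (i : Fin n) (u : Euc n → ℝ) (x : Euc n) : ℝ :=
  fderiv ℝ u x (EuclideanSpace.single i 1)

/-- `div(A ∇u)` for a matrix-valued coefficient `A`. -/
def divAGradM (A : Euc n → Fin n → Fin n → ℝ) (u : Euc n → ℝ) (x : Euc n) : ℝ :=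
  ∑ i, pd i (fun y => ∑ j, A y i j * pd j u y) x

/-- `div(a ∇u)` for a scalar coefficient `a`. -/
def divAGradS (a : Euc n → ℝ) (u : Euc n → ℝ) (x : Euc n) : ℝ :=
  ∑ i, pd i (fun y => a y * pd i u y) x

/-- The Laplacian. -/
def lap (u : Euc n → ℝ) (x : Euc n) : ℝ := ∑ i, pd i (pd i u) x

/-- Sup norm over a set. -/
def supN {F : Type*} [NormedAddCommGroup F] (s : Set (Euc n)) (f : Euc n → F) : ℝ :=
  ⨆ x : s, ‖f x.1‖

/-- Hölder seminorm of exponent `β` over `s`. -/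
def holderS {F : Type*} [NormedAddCommGroup F] (β : ℝ) (s : Set (Euc n)) (f : Euc n → F) : ℝ :=
  ⨆ p : s × s, ‖f p.1.1 - f p.2.1‖ / dist p.1.1 p.2.1 ^ β

/-- Hölder boundedness of exponent `β` over `s`. -/
def HBdd {F : Type*} [NormedAddCommGroup F] (β : ℝ) (s : Set (Euc n)) (f : Euc n → F) : Prop :=
  ∃ K : ℝ, ∀ x ∈ s, ∀ y ∈ s, ‖f x - f y‖ ≤ K * dist x y ^ β

/-- The `C^{0,β}(s)` norm. -/
def c0N (β : ℝ) (s : Set (Euc n)) (f : Euc n → ℝ) : ℝ := supN s f + holderS β s f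

/-- The `C^{1,β}(s)` norm. -/
def c1N (β : ℝ) (s : Set (Euc n)) (f : Euc n → ℝ) : ℝ :=
  supN s f + supN s (fderiv ℝ f) + holderS β s (fderiv ℝ f)

/-- The `C^{2,β}(s)` norm. -/
def c2N (β : ℝ) (s : Set (Euc n)) (f : Euc n → ℝ) : ℝ :=
  supN s f + supN s (fderiv ℝ f) + supN s (fderiv ℝ (fderiv ℝ f))
    + holderS β s (fderiv ℝ (fderiv ℝ f))

/-- Membership in `C^{0,β}(s)`. -/
def MemC0 (β : ℝ) (s : Set (Euc n)) (f : Euc n → ℝ) : Prop :=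
  ContinuousOn f s ∧ HBdd β s f

/-- Membership in `C^{1,β}(s)` (possibly vector-valued). -/
def MemC1 {F : Type*} [NormedAddCommGroup F] [NormedSpace ℝ F] (β : ℝ) (s : Set (Euc n))
    (f : Euc n → F) : Prop :=
  ContDiffOn ℝ 1 f s ∧ HBdd β s (fderiv ℝ f)

/-- Membership in `C^{2,β}(s)`. -/
def MemC2 (β : ℝ) (s : Set (Euc n)) (f : Euc n → ℝ) : Prop :=
  ContDiffOn ℝ 2 f s ∧ HBdd β s (fderiv ℝ (fderiv ℝ f))

/-- The `L^p(Ω)` norm. -/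
def lpN (p : ℝ≥0∞) (Ω : Set (Euc n)) (f : Euc n → ℝ) : ℝ≥0∞ :=
  eLpNorm f p (volume.restrict Ω)

/-- The `W^{k,r}(Ω)` norm. -/
def wkN (k : ℕ) (r : ℝ) (Ω : Set (Euc n)) (u : Euc n → ℝ) : ℝ≥0∞ :=
  ∑ i ∈ Finset.range (k + 1),
    eLpNorm (fun x => ‖iteratedFDeriv ℝ i u x‖) (ENNReal.ofReal r) (volume.restrict Ω)

/-- Membership in `W^{k,r}(Ω)`. -/
def MemW (k : ℕ) (r : ℝ) (Ω : Set (Euc n)) (u : Euc n → ℝ) : Prop := wkN k r Ω u < ⊤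

/-- The trace-space norm `W^{k-1/r,r}(∂Ω)`, as the quotient (infimum) norm over extensions. -/
def traceN (k : ℕ) (r : ℝ) (Ω : Set (Euc n)) (f : Euc n → ℝ) : ℝ≥0∞ :=
  ⨅ v ∈ {v : Euc n → ℝ | EqOn v f (frontier Ω)}, wkN k r Ω v

/-- Membership in the trace space `W^{k-1/r,r}(∂Ω)`: `f` is the boundary restriction of some
`W^{k,r}(Ω)` function. -/
def MemTrace (k : ℕ) (r : ℝ) (Ω : Set (Euc n)) (f : Euc n → ℝ) : Prop :=
  ∃ v : Euc n → ℝ, EqOn v f (frontier Ω) ∧ MemW k r Ω v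

/-- The first Dirichlet eigenvalue of the Laplacian on `Ω`, via the optimal Poincaré constant. -/
def lambda1 (Ω : Set (Euc n)) : ℝ :=
  sSup {c : ℝ | 0 ≤ c ∧ ∀ u : Euc n → ℝ, ContDiff ℝ 1 u →
    (∀ x ∈ frontier Ω, u x = 0) →
    c * ∫ x in Ω, u x ^ 2 ≤ ∫ x in Ω, ‖fderiv ℝ u x‖ ^ 2}

/-- The class `A_μ` of symmetric uniformly elliptic Lipschitz matrix coefficients. -/
def MemA (μ : ℝ) (Ω : Set (Euc n)) (A : Euc n → Fin n → Fin n → ℝ) : Prop :=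
  ContinuousOn A (closure Ω) ∧ HBdd 1 (closure Ω) A ∧
  (∀ x ∈ closure Ω, ∀ i j, A x i j = A x j i) ∧
  (∀ x ∈ closure Ω, ∀ ξ : Fin n → ℝ,
    μ⁻¹ * ∑ i, ξ i ^ 2 ≤ ∑ i, ∑ j, A x i j * ξ i * ξ j ∧
      ∑ i, ∑ j, A x i j * ξ i * ξ j ≤ μ * ∑ i, ξ i ^ 2)

/-- The scalar class `A_μ^s`. -/
def MemAs (μ : ℝ) (Ω : Set (Euc n)) (a : Euc n → ℝ) : Prop :=
  ContinuousOn a (closure Ω) ∧ HBdd 1 (closure Ω) a ∧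
  ∀ x ∈ closure Ω, μ⁻¹ ≤ a x ∧ a x ≤ μ

/-- The class `Q_λ = {q ∈ L^∞(Ω) : q ≥ -λ}`. -/
def MemQ (lam : ℝ) (Ω : Set (Euc n)) (q : Euc n → ℝ) : Prop :=
  lpN ⊤ Ω q < ⊤ ∧ ∀ᵐ x ∂(volume.restrict Ω), -lam ≤ q x

/-- The class `Q_λ^- = {q ∈ L^∞(Ω) : 0 ≥ q ≥ -λ}`. -/
def MemQneg (lam : ℝ) (Ω : Set (Euc n)) (q : Euc n → ℝ) : Prop :=
  lpN ⊤ Ω q < ⊤ ∧ ∀ᵐ x ∂(volume.restrict Ω), -lam ≤ q x ∧ q x ≤ 0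

/-- The class `D = ⋃_{μλ < λ₁(Ω)} A_μ × Q_λ`. -/
def MemD (Ω : Set (Euc n)) (A : Euc n → Fin n → Fin n → ℝ) (q : Euc n → ℝ) : Prop :=
  ∃ μ lam : ℝ, 1 ≤ μ ∧ 0 ≤ lam ∧ μ * lam < lambda1 Ω ∧ MemA μ Ω A ∧ MemQ lam Ω q

/-- The class `𝒟_{ϰ,Λ}` of Hölder coefficient pairs. -/
def MemDKL (β ϰ Λ : ℝ) (Ω : Set (Euc n)) (a q : Euc n → ℝ) : Prop :=
  MemC1 β (closure Ω) a ∧ MemC0 β (closure Ω) q ∧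
  (∀ x ∈ closure Ω, 0 ≤ q x) ∧ (∀ x ∈ closure Ω, ϰ ≤ a x) ∧
  c1N β (closure Ω) a + c0N β (closure Ω) q ≤ Λ

/-- Norm of `P_{A,q} u` in `L^r(Ω) × W^{2-1/r,r}(∂Ω)`. -/
def opN (r : ℝ) (Ω : Set (Euc n)) (A : Euc n → Fin n → Fin n → ℝ) (q : Euc n → ℝ)
    (u : Euc n → ℝ) : ℝ≥0∞ :=
  lpN (ENNReal.ofReal r) Ω (fun x => -divAGradM A u x + q x * u x) + traceN 2 r Ω u

/-- The operator norm of `P_{A,q}⁻¹`. -/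
def invN (r : ℝ) (Ω : Set (Euc n)) (A : Euc n → Fin n → Fin n → ℝ) (q : Euc n → ℝ) : ℝ≥0∞ :=
  ⨆ u ∈ {u : Euc n → ℝ | MemW 2 r Ω u}, wkN 2 r Ω u / opN r Ω A q u

/-- `P_{A,q} : u ↦ (-div(A∇u) + q u, u|_Γ)` is an isomorphism from `W^{2,r}(Ω)` onto
`L^r(Ω) × W^{2-1/r,r}(∂Ω)`: bounded, bijective, with bounded inverse. -/
def IsIso (r : ℝ) (Ω : Set (Euc n)) (A : Euc n → Fin n → Fin n → ℝ) (q : Euc n → ℝ) : Prop :=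
  (∃ C : ℝ≥0∞, C < ⊤ ∧ ∀ u : Euc n → ℝ, MemW 2 r Ω u → opN r Ω A q u ≤ C * wkN 2 r Ω u) ∧
  (∀ F f : Euc n → ℝ, lpN (ENNReal.ofReal r) Ω F < ⊤ → MemTrace 2 r Ω f →
    ∃ u : Euc n → ℝ, MemW 2 r Ω u ∧
      (∀ x ∈ Ω, -divAGradM A u x + q x * u x = F x) ∧ EqOn u f (frontier Ω) ∧
      ∀ v : Euc n → ℝ, MemW 2 r Ω v → (∀ x ∈ Ω, -divAGradM A v x + q x * v x = F x) →
        EqOn v f (frontier Ω) → EqOn v u (closure Ω)) ∧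
  invN r Ω A q < ⊤

/-- `x ∈ s` is a critical point of `h` on `s`: the derivative of `h` vanishes along every
differentiable curve passing through `x` inside `s`. -/
def IsCritOn (s : Set (Euc n)) (h : Euc n → ℝ) (x : Euc n) : Prop :=
  ∀ c : ℝ → Euc n, DifferentiableAt ℝ c 0 → (∀ t, c t ∈ s) → c 0 = x →
    deriv (h ∘ c) 0 = 0

end HybridIP

open HybridIP

namespace HybridIP

variable {n : ℕ}

/-- Second-derivative test in each coordinate direction at an interior minimum. -/
lemma pd_pd_nonneg {v : Euc n → ℝ} {x : Euc n} (i : Fin n)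
    (hv : ∀ᶠ y in 𝓝 x, DifferentiableAt ℝ v y) (hv2 : DifferentiableAt ℝ (pd i v) x)
    (hmin : IsLocalMin v x) : 0 ≤ pd i (pd i v) x := by
  set e : Euc n := EuclideanSpace.single i 1 with he
  set c : ℝ → Euc n := fun t => x + t • e with hc
  have hcd : ∀ t, HasDerivAt c e t := fun t => by
    simpa [hc] using ((hasDerivAt_id t).smul_const e).const_add x
  have hc0 : c 0 = x := by simp [hc]
  have hct : Filter.Tendsto c (𝓝 0) (𝓝 x) := by
    have := (hcd 0).continuousAt.tendsto
    rwa [hc0] at this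
  have h1 : ∀ᶠ t in 𝓝 (0 : ℝ), HasDerivAt (fun s => v (c s)) (pd i v (c t)) t := by
    filter_upwards [hct.eventually hv] with t ht
    exact ht.hasFDerivAt.comp_hasDerivAt t (hcd t)
  have h1' : deriv (fun s => v (c s)) =ᶠ[𝓝 0] fun t => pd i v (c t) :=
    h1.mono fun t ht => ht.deriv
  have h2 : HasDerivAt (fun t => pd i v (c t)) (pd i (pd i v) x) 0 := by
    have h : HasFDerivAt (pd i v) (fderiv ℝ (pd i v) x) (c 0) := by
      rw [hc0]; exact hv2.hasFDerivAt
    exact h.comp_hasDerivAt 0 (hcd 0)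
  have h2' : deriv (deriv (fun s => v (c s))) 0 = pd i (pd i v) x := by
    rw [h1'.deriv_eq, h2.deriv]
  have hgmin : IsLocalMin (fun s => v (c s)) 0 := by
    have := hct.eventually hmin
    simpa [IsLocalMin, IsMinFilter, hc0] using this
  by_contra hneg
  push Not at hneg
  -- A negative second derivative would make `0` a local maximum as well, so that the restriction
  -- of `v` to the line is locally constant.
  have hgmax : IsLocalMax (fun s => v (c s)) 0 :=
    isLocalMax_of_deriv_deriv_neg (by rw [h2']; exact hneg) hgmin.deriv_eq_zero
      h1.self_of_nhds.continuousAt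
  have hconst : (fun s => v (c s)) =ᶠ[𝓝 0] fun _ => v (c 0) := by
    filter_upwards [hgmin, hgmax] with t ht1 ht2
    exact le_antisymm ht2 ht1
  have : deriv (deriv (fun s => v (c s))) 0 = 0 := by
    rw [hconst.deriv.deriv_eq]; simp
  rw [h2'] at this
  exact hneg.ne this

lemma divAGradS_eq {a u : Euc n → ℝ} {x : Euc n} (ha : DifferentiableAt ℝ a x)
    (hu : ∀ i, DifferentiableAt ℝ (pd i u) x) :
    divAGradS a u x = ∑ i, (a x * pd i (pd i u) x + pd i u x * pd i a x) := by
  unfold divAGradS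
  refine Finset.sum_congr rfl fun i _ => ?_
  have := (ha.hasFDerivAt.mul (hu i).hasFDerivAt).fderiv
  have h2 : pd i (fun y => a y * pd i u y) x
      = fderiv ℝ (fun y => a y * pd i u y) x (EuclideanSpace.single i 1) := rfl
  rw [h2]
  change fderiv ℝ (fun y => a y * pd i u y) x = _ at this
  rw [this]
  simp [pd]

lemma differentiableAt_pd {u : Euc n → ℝ} {x : Euc n} (hu : ContDiffAt ℝ 2 u x) (i : Fin n) :
    DifferentiableAt ℝ (pd i u) x := by
  have h : DifferentiableAt ℝ (fderiv ℝ u) x :=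
    (hu.fderiv_right (m := 1) (by norm_num)).differentiableAt (by norm_num)
  exact h.clm_apply (differentiableAt_const _)

lemma pd_sub {u w : Euc n → ℝ} {y : Euc n} (i : Fin n) (hu : DifferentiableAt ℝ u y)
    (hw : DifferentiableAt ℝ w y) : pd i (fun z => u z - w z) y = pd i u y - pd i w y := by
  unfold pd
  rw [fderiv_fun_sub hu hw]
  rfl

/-- The exponential barrier `y ↦ δ * exp (t * y i₀)`. -/
def barrier (δ t : ℝ) (i₀ : Fin n) (y : Euc n) : ℝ := δ * Real.exp (t * y i₀)

lemma contDiff_barrier (δ t : ℝ) (i₀ : Fin n) {k : WithTop ℕ∞} :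
    ContDiff ℝ k (barrier δ t i₀) := by
  have h : ContDiff ℝ k fun y : Euc n => y i₀ :=
    (EuclideanSpace.proj (𝕜 := ℝ) i₀).contDiff
  exact contDiff_const.mul (contDiff_const.mul h).exp

lemma pd_barrier (δ t : ℝ) (i₀ i : Fin n) :
    pd i (barrier δ t i₀) = barrier (δ * if i = i₀ then t else 0) t i₀ := by
  funext y
  have h : HasFDerivAt (fun y : Euc n => y i₀) (EuclideanSpace.proj (𝕜 := ℝ) i₀) y :=
    (EuclideanSpace.proj (𝕜 := ℝ) i₀).hasFDerivAt
  have h2 : HasFDerivAt (barrier δ t i₀) _ y := ((h.const_mul t).exp).const_mul δ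
  unfold pd
  rw [h2.fderiv]
  rcases eq_or_ne i i₀ with rfl | hi
  · simp [barrier]; ring
  · simp [barrier, hi, hi.symm]

/-- The sup bounds on `∇𝔞` and `𝔮` contained in the norm bound defining `𝒟_{ϰ,Λ}`. All the suprema
involved are over bounded families, by compactness of the closure or Hölder continuity, so none of
them is the default value `0`. -/
lemma abs_pd_le_and_le {β ϰ Λ : ℝ} {Ω : Set (Euc n)} (hΩb : Bornology.IsBounded Ω)
    (hβ0 : 0 < β) {a q : Euc n → ℝ} (h : MemDKL β ϰ Λ Ω a q) {x : Euc n} (hx : x ∈ Ω)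
    (i : Fin n) : |pd i a x| ≤ Λ ∧ q x ≤ Λ := by
  obtain ⟨⟨-, K, hK⟩, ⟨hq, -⟩, -, -, hN⟩ := h
  have hxc := subset_closure hx
  have hcomp : IsCompact (closure Ω) := hΩb.isCompact_closure
  have hq1 : ‖q x‖ ≤ supN (closure Ω) q := by
    obtain ⟨C, hC⟩ := hcomp.exists_bound_of_continuousOn hq
    exact le_ciSup (f := fun y : closure Ω => ‖q y.1‖)
      ⟨C, by rintro _ ⟨y, rfl⟩; exact hC y.1 y.2⟩ ⟨x, hxc⟩
  have ha1 : ‖fderiv ℝ a x‖ ≤ supN (closure Ω) (fderiv ℝ a) := by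
    obtain ⟨D, hD⟩ := Metric.isBounded_iff.1 hcomp.isBounded
    refine le_ciSup (f := fun y : closure Ω => ‖fderiv ℝ a y.1‖)
      ⟨|K| * D ^ β + ‖fderiv ℝ a x‖, ?_⟩ ⟨x, hxc⟩
    rintro _ ⟨y, rfl⟩
    have h1 := hK y.1 y.2 x hxc
    have h2 : K * dist y.1 x ^ β ≤ |K| * D ^ β := by
      have := Real.rpow_le_rpow dist_nonneg (hD y.2 hxc) hβ0.le
      have h0 : 0 ≤ dist y.1 x ^ β := by positivity
      exact (mul_le_mul_of_nonneg_right (le_abs_self K) h0).trans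
        (mul_le_mul_of_nonneg_left this (abs_nonneg K))
    have h3 := norm_sub_norm_le (fderiv ℝ a y.1) (fderiv ℝ a x)
    change ‖fderiv ℝ a y.1‖ ≤ _
    linarith
  have hn1 : 0 ≤ supN (closure Ω) a := Real.iSup_nonneg fun _ => norm_nonneg _
  have hn2 : 0 ≤ holderS β (closure Ω) (fderiv ℝ a) :=
    Real.iSup_nonneg fun _ => by positivity
  have hn3 : 0 ≤ holderS β (closure Ω) q := Real.iSup_nonneg fun _ => by positivity
  have hpd : |pd i a x| ≤ ‖fderiv ℝ a x‖ := by
    have := (fderiv ℝ a x).le_opNorm (EuclideanSpace.single i (1 : ℝ))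
    simpa [pd] using this
  have hq2 := (le_abs_self (q x)).trans_eq (Real.norm_eq_abs _).symm
  have hq0 := norm_nonneg (q x)
  have ha0 := norm_nonneg (fderiv ℝ a x)
  unfold c1N c0N at hN
  constructor <;> linarith

/-- Comparison with a barrier: `δ * exp (t * y i₀)` is a strict subsolution when `t` is large, hence
lies below every solution that dominates it on the boundary. -/
lemma barrier_le {β ϰ Λ : ℝ} {Ω : Set (Euc n)} (hΩo : IsOpen Ω)
    (hΩb : Bornology.IsBounded Ω) (hβ0 : 0 < β) {a q u : Euc n → ℝ} (h : MemDKL β ϰ Λ Ω a q)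
    (hu : ContDiffOn ℝ 2 u (closure Ω)) (hpde : ∀ x ∈ Ω, -divAGradS a u x + q x * u x = 0)
    {δ t : ℝ} (hδ : 0 < δ) (ht : 0 < t) (hlarge : 0 < ϰ * t ^ 2 - Λ * t - Λ) (i₀ : Fin n)
    (hbd : ∀ x ∈ frontier Ω, barrier δ t i₀ x ≤ u x) :
    ∀ x ∈ closure Ω, barrier δ t i₀ x ≤ u x := by
  intro x hx
  set w := barrier δ t i₀ with hw
  have hwC : ContDiff ℝ 2 w := contDiff_barrier δ t i₀
  have hvc : ContinuousOn (fun y => u y - w y) (closure Ω) :=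
    hu.continuousOn.sub hwC.continuous.continuousOn
  obtain ⟨x₀, hx₀, hmin⟩ := hΩb.isCompact_closure.exists_isMinOn ⟨x, hx⟩ hvc
  suffices h0 : 0 ≤ u x₀ - w x₀ by
    have : u x₀ - w x₀ ≤ u x - w x := hmin hx
    linarith
  by_contra hneg
  push Not at hneg
  have hx₀Ω : x₀ ∈ Ω := by
    by_contra hnot
    have : x₀ ∈ frontier Ω := by
      rw [hΩo.frontier_eq]; exact ⟨hx₀, hnot⟩
    linarith [hbd x₀ this]
  have hnhds : Ω ∈ 𝓝 x₀ := hΩo.mem_nhds hx₀Ω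
  have hcnhds : ∀ y ∈ Ω, closure Ω ∈ 𝓝 y := fun y hy =>
    Filter.mem_of_superset (hΩo.mem_nhds hy) subset_closure
  have huA : ∀ y ∈ Ω, ContDiffAt ℝ 2 u y := fun y hy => hu.contDiffAt (hcnhds y hy)
  have huD : ∀ y ∈ Ω, DifferentiableAt ℝ u y := fun y hy =>
    (huA y hy).differentiableAt (by norm_num)
  have hwD : ∀ y, DifferentiableAt ℝ w y := fun y => hwC.contDiffAt.differentiableAt (by norm_num)
  have haD : DifferentiableAt ℝ a x₀ :=
    (h.1.1.contDiffAt (hcnhds x₀ hx₀Ω)).differentiableAt (by norm_num)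
  have hloc : IsLocalMin (fun y => u y - w y) x₀ := hmin.isLocalMin (hcnhds x₀ hx₀Ω)
  have hpdv : ∀ i, pd i (fun y => u y - w y) =ᶠ[𝓝 x₀] fun y => pd i u y - pd i w y := fun i => by
    filter_upwards [hnhds] with y hy
    exact pd_sub i (huD y hy) (hwD y)
  have hgrad : ∀ i, pd i u x₀ = pd i w x₀ := fun i => by
    have h1 : pd i (fun y => u y - w y) x₀ = 0 := by
      unfold pd; rw [hloc.fderiv_eq_zero]; rfl
    rw [(hpdv i).self_of_nhds] at h1
    linarith
  have hhess : ∀ i, pd i (pd i w) x₀ ≤ pd i (pd i u) x₀ := fun i => by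
    have hd : DifferentiableAt ℝ (pd i (fun y => u y - w y)) x₀ :=
      differentiableAt_pd ((huA x₀ hx₀Ω).sub hwC.contDiffAt) i
    have h1 := pd_pd_nonneg i
      (by filter_upwards [hnhds] with y hy using (huD y hy).sub (hwD y)) hd hloc
    have h2 : pd i (pd i (fun y => u y - w y)) x₀ = pd i (fun y => pd i u y - pd i w y) x₀ := by
      change fderiv ℝ _ _ _ = fderiv ℝ _ _ _
      rw [(hpdv i).fderiv_eq]
    rw [h2, pd_sub i (differentiableAt_pd (huA x₀ hx₀Ω) i)
      (differentiableAt_pd hwC.contDiffAt i)] at h1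
    linarith
  obtain ⟨hpa, hqΛ⟩ := abs_pd_le_and_le hΩb hβ0 h hx₀Ω i₀
  have hq0 := h.2.2.1 x₀ hx₀
  have haϰ := h.2.2.2.1 x₀ hx₀
  have hwpos : 0 < w x₀ := by rw [hw]; unfold barrier; positivity
  have hΛ0 : 0 ≤ Λ := (abs_nonneg _).trans hpa
  have hϰ : 0 < ϰ := by
    by_contra hϰ
    nlinarith [sq_nonneg t, mul_nonneg hΛ0 ht.le]
  have hlow : (a x₀ * t ^ 2 + t * pd i₀ a x₀) * w x₀ ≤ divAGradS a u x₀ := by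
    rw [divAGradS_eq haD fun i => differentiableAt_pd (huA x₀ hx₀Ω) i]
    calc (a x₀ * t ^ 2 + t * pd i₀ a x₀) * w x₀
        = ∑ i, (a x₀ * pd i (pd i w) x₀ + pd i w x₀ * pd i a x₀) := by
          rw [Finset.sum_eq_single i₀]
          · rw [hw, pd_barrier, pd_barrier]; simp [barrier]; ring
          · intro i _ hi
            rw [hw, pd_barrier, pd_barrier]; simp [barrier, hi]
          · simp
      _ ≤ _ := by
          refine Finset.sum_le_sum fun i _ => ?_
          rw [hgrad i]
          have := mul_le_mul_of_nonneg_left (hhess i) (hϰ.le.trans haϰ)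
          linarith
  have heq := hpde x₀ hx₀Ω
  have hcoef : 0 < a x₀ * t ^ 2 + t * pd i₀ a x₀ - q x₀ := by
    have h1 := mul_le_mul_of_nonneg_right haϰ (sq_nonneg t)
    have h2 := mul_le_mul_of_nonneg_left (abs_le.1 hpa).1 ht.le
    linarith
  have h3 := mul_pos hcoef hwpos
  have h4 := mul_nonneg hq0 (by linarith : 0 ≤ w x₀ - u x₀)
  linarith

end HybridIP

/-- Uniform positive lower bound for solutions `u_{𝔞,𝔮}(f)` over
`(𝔞,𝔮) ∈ 𝒟_{ϰ,Λ}`, when `min_Γ f > 0`. -/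
theorem stmt_14 (n : ℕ) (hn : 2 ≤ n) (Ω : Set (Euc n)) (hΩo : IsOpen Ω)
    (hΩb : Bornology.IsBounded Ω) (hΩne : Ω.Nonempty)
    (β ϰ Λ : ℝ) (hβ0 : 0 < β) (hβ1 : β < 1) (hϰ : 0 < ϰ) (hϰΛ : ϰ ≤ Λ)
    (f : Euc n → ℝ) (hfreg : MemC2 β (frontier Ω) f)
    (m : ℝ) (hm : 0 < m) (hfm : ∀ x ∈ frontier Ω, m ≤ f x) :
    ∃ ε : ℝ, 0 < ε ∧
      ∀ a q : Euc n → ℝ, MemDKL β ϰ Λ Ω a q →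
      ∀ u : Euc n → ℝ,
        MemC2 β (closure Ω) u → (∀ x ∈ Ω, -divAGradS a u x + q x * u x = 0) →
        Set.EqOn u f (frontier Ω) →
        ∀ x ∈ closure Ω, ε ≤ u x := by
  obtain ⟨R, hR⟩ := hΩb.closure.exists_norm_le
  let i₀ : Fin n := ⟨0, by omega⟩
  -- This `t` satisfies `ϰ t = 2 Λ + ϰ` and `1 ≤ t`, whence `ϰ t² - Λ t - Λ ≥ ϰ`.
  obtain ⟨t, ht⟩ : ∃ t : ℝ, ϰ * t = 2 * Λ + ϰ := ⟨(2 * Λ + ϰ) / ϰ, by field_simp⟩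
  have hΛ : 0 < Λ := hϰ.trans_le hϰΛ
  have ht1 : 1 ≤ t := by
    by_contra hlt
    push Not at hlt
    nlinarith
  have hlarge : 0 < ϰ * t ^ 2 - Λ * t - Λ := by
    have : ϰ * t ^ 2 = (2 * Λ + ϰ) * t := by rw [← ht]; ring
    nlinarith
  have hcoord : ∀ x ∈ closure Ω, |x i₀| ≤ R := fun x hx =>
    (by simpa using PiLp.norm_apply_le x i₀ : |x i₀| ≤ ‖x‖).trans (hR x hx)
  have htop : ∀ x ∈ closure Ω, barrier (m * Real.exp (-(t * R))) t i₀ x ≤ m := fun x hx => by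
    unfold barrier
    rw [mul_assoc, ← Real.exp_add]
    refine mul_le_of_le_one_right hm.le (Real.exp_le_one_iff.2 ?_)
    nlinarith [(abs_le.1 (hcoord x hx)).2]
  refine ⟨m * Real.exp (-(t * R)) * Real.exp (-(t * R)), by positivity, ?_⟩
  intro a q haq u hu hpde huf x hx
  refine le_trans ?_ (barrier_le hΩo hΩb hβ0 haq hu.1 hpde
    (δ := m * Real.exp (-(t * R))) (by positivity) (by linarith) hlarge i₀
    (fun y hy => ?_) x hx)
  · unfold barrier
    refine mul_le_mul_of_nonneg_left (Real.exp_le_exp.2 ?_) (by positivity)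
    nlinarith [(abs_le.1 (hcoord x hx)).1]
  · rw [huf hy]
    exact (htop y (frontier_subset_closure hy)).trans (hfm y hy)
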